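/- arXiv:0812.5002 — 3 statements merged into one kernel-verified Lean document; each statement's English description precedes it below -/
import Mathlib

section
/- Let L be the centerless twisted N=2 superconformal algebra, V = L ⊗ L the L-module under the adjoint diagonal action with grading V_i = Σ_{j+k=i} L_j ⊗ L_k, and let d be a homogeneous super-derivation from L to V of degree i ∈ (1/2)ℤ with i ≠ 0. Then d is inner; explicitly, d = u_inn for u = −(1/i) d(L_0) ∈ V_i, i.e., d(x) = (−1)^{[u][x]} x ∗ u for all x ∈ L. -/
namespace N2

/-- Basis indices of the centerless twisted N=2 superconformal algebra:
`L m` is the Virasoro generator `L_m` (`m ∈ ℤ`),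
`T k` is the Heisenberg generator `T_{k+1/2}` (`k ∈ ℤ`, index in `1/2 + ℤ`),
`G n` is the fermionic generator `G_{n/2}` (`n ∈ ℤ`, index in `(1/2)ℤ`). -/
inductive Idx : Type
  | L : ℤ → Idx
  | T : ℤ → Idx
  | G : ℤ → Idx
  deriving DecidableEq

noncomputable section

/-- The centerless twisted N=2 superconformal algebra `𝓛`, as the free
complex vector space on the basis `{L_m, T_r, G_p}`. -/
abbrev Lsa : Type := Idx →₀ ℂ

/-- `𝓛 ⊗ 𝓛`, realized as the free complex vector space on pairs of basis indices. -/
abbrev V : Type := (Idx × Idx) →₀ ℂ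

/-- `𝓛 ⊗ 𝓛 ⊗ 𝓛`. -/
abbrev W : Type := (Idx × Idx × Idx) →₀ ℂ

/-- the basis vector indexed by `i`. -/
def e (i : Idx) : Lsa := Finsupp.single i 1

/-- the ℤ₂-parity of the basis elements: `L_m, T_r` are even, `G_p` is odd. -/
def par : Idx → ZMod 2
  | .L _ => 0
  | .T _ => 0
  | .G _ => 1

/-- the sign `(-1)^p` for `p ∈ ℤ₂`. -/
def sgn (p : ZMod 2) : ℂ := if p = 0 then 1 else -1

/-- the `(1/2)ℤ`-degree of a basis element, as a rational number:
`L_m ↦ m`, `T_{k+1/2} ↦ k + 1/2`, `G_{n/2} ↦ n/2`. -/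
def qdeg : Idx → ℚ
  | .L m => (m : ℚ)
  | .T k => (k : ℚ) + 1/2
  | .G n => (n : ℚ) / 2

/-- The super-bracket of `𝓛` on basis elements:
`[L_m, L_n] = (m-n) L_{m+n}`, `[L_m, T_r] = -r T_{r+m}`, `[T_r, T_s] = 0`,
`[L_m, G_p] = (m/2 - p) G_{p+m}`, `[T_r, G_p] = G_{p+r}`,
`[G_p, G_q] = (-1)^{2p} 2 L_{p+q}` if `p+q ∈ ℤ` and
`[G_p, G_q] = (-1)^{2p+1} (p-q) T_{p+q}` if `p+q ∈ 1/2+ℤ`,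
together with the super skew-symmetric counterparts. -/
def bk : Idx → Idx → Lsa
  | .L m, .L n => ((m : ℂ) - n) • e (.L (m + n))
  | .L m, .T k => (-((k : ℂ) + 1/2)) • e (.T (k + m))
  | .L m, .G n => (((m : ℂ) - n) / 2) • e (.G (n + 2*m))
  | .T k, .L m => ((k : ℂ) + 1/2) • e (.T (k + m))
  | .T _, .T _ => 0
  | .T k, .G n => e (.G (n + 2*k + 1))
  | .G n, .L m => (-((m : ℂ) - n) / 2) • e (.G (n + 2*m))
  | .G n, .T k => - e (.G (n + 2*k + 1))
  | .G n, .G n' =>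
      if (n + n') % 2 = 0 then
        ((-1 : ℂ) ^ n * 2) • e (.L ((n + n') / 2))
      else
        ((-1 : ℂ) ^ (n + 1) * (((n : ℂ) - n') / 2)) • e (.T ((n + n' - 1) / 2))

/-- the bracket of `𝓛`, extended bilinearly to all of `𝓛`. -/
def br (x y : Lsa) : Lsa :=
  x.sum fun i a => y.sum fun j b => (a * b) • bk i j

/-- the adjoint diagonal action of `𝓛` on `𝓛 ⊗ 𝓛`:
`x ∗ (a ⊗ b) = [x,a] ⊗ b + (-1)^{[x][a]} a ⊗ [x,b]`. -/
def act2 (x : Lsa) (v : V) : V :=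
  x.sum fun i a => v.sum fun p c =>
    (a * c) •
      (((bk i p.1).sum fun k t => Finsupp.single (k, p.2) t)
        + sgn (par i * par p.1) • ((bk i p.2).sum fun k t => Finsupp.single (p.1, k) t))

/-- the adjoint diagonal action of `𝓛` on `𝓛 ⊗ 𝓛 ⊗ 𝓛`. -/
def act3 (x : Lsa) (w : W) : W :=
  x.sum fun i a => w.sum fun p c =>
    (a * c) •
      (((bk i p.1).sum fun k t => Finsupp.single (k, p.2.1, p.2.2) t)
        + sgn (par i * par p.1) •
            ((bk i p.2.1).sum fun k t => Finsupp.single (p.1, k, p.2.2) t)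
        + sgn (par i * (par p.1 + par p.2.1)) •
            ((bk i p.2.2).sum fun k t => Finsupp.single (p.1, p.2.1, k) t))

/-- the adjoint diagonal action of `𝓛` on the `n`-fold tensor power `𝓛^{⊗n}`,
realized as the free complex vector space on `n`-tuples of basis indices:
`x ∗ (a₁ ⊗ ⋯ ⊗ aₙ) = Σ_k (-1)^{[x]([a₁]+⋯+[a_{k-1}])} a₁ ⊗ ⋯ ⊗ [x,a_k] ⊗ ⋯ ⊗ aₙ`. -/
def actN (n : ℕ) (x : Lsa) (v : (Fin n → Idx) →₀ ℂ) : (Fin n → Idx) →₀ ℂ :=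
  x.sum fun i a => v.sum fun f c =>
    (a * c) •
      (Finset.univ.sum fun k : Fin n =>
        sgn (par i * ((Finset.univ.filter fun l => l < k).sum fun l => par (f l))) •
          ((bk i (f k)).sum fun j t => Finsupp.single (Function.update f k j) t))

/-- the super-twist map `τ : 𝓛 ⊗ 𝓛 → 𝓛 ⊗ 𝓛`, `τ(x ⊗ y) = (-1)^{[x][y]} y ⊗ x`. -/
def tau (v : V) : V :=
  v.sum fun p c => (sgn (par p.1 * par p.2) * c) • Finsupp.single (p.2, p.1) 1

/-- the image `Im(1⊗1 - τ) ⊂ 𝓛 ⊗ 𝓛`. -/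
def ImOneSubTau : Set V := Set.range fun v : V => v - tau v

/-- the super-cyclic map `ξ` on `𝓛 ⊗ 𝓛 ⊗ 𝓛`:
`ξ(x₁ ⊗ x₂ ⊗ x₃) = (-1)^{[x₁]([x₂]+[x₃])} x₂ ⊗ x₃ ⊗ x₁`. -/
def xi (w : W) : W :=
  w.sum fun p c =>
    (sgn (par p.1 * (par p.2.1 + par p.2.2)) * c) • Finsupp.single (p.2.1, p.2.2, p.1) 1

/-- `c(r) = [r¹², r¹³] + [r¹², r²³] + [r¹³, r²³] ∈ 𝓛 ⊗ 𝓛 ⊗ 𝓛` for `r ∈ 𝓛 ⊗ 𝓛`. -/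
def cYB (r : V) : W :=
  r.sum fun p a => r.sum fun q b =>
    (a * b) •
      (sgn (par q.1 * par p.2) •
          ((bk p.1 q.1).sum fun k t => Finsupp.single (k, p.2, q.2) t)
        + ((bk p.2 q.1).sum fun k t => Finsupp.single (p.1, k, q.2) t)
        + sgn (par q.1 * par p.2) •
            ((bk p.2 q.2).sum fun k t => Finsupp.single (p.1, q.1, k) t))

/-- `1 ⊗ D : 𝓛 ⊗ 𝓛 → 𝓛 ⊗ 𝓛 ⊗ 𝓛` for an even map `D : 𝓛 → 𝓛 ⊗ 𝓛`. -/
def oneTensorMap (D : Lsa → V) (v : V) : W :=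
  v.sum fun p c => c • ((D (e p.2)).sum fun q t => Finsupp.single (p.1, q.1, q.2) t)

/-- `r ∈ 𝓛 ⊗ 𝓛` is homogeneous of parity `ε ∈ ℤ₂`. -/
def IsParityV (ε : ZMod 2) (r : V) : Prop := ∀ p ∈ r.support, par p.1 + par p.2 = ε

/-- `r ∈ 𝓛 ⊗ 𝓛` is even (degree `0̄`). -/
def IsEvenV (r : V) : Prop := IsParityV 0 r

/-- `r` lies in the graded component `V_ι = Σ_{j+k=ι} 𝓛_j ⊗ 𝓛_k` of `V = 𝓛 ⊗ 𝓛`. -/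
def IsDegV (ι : ℚ) (r : V) : Prop := ∀ p ∈ r.support, qdeg p.1 + qdeg p.2 = ι

/-- the linear map `𝓛 → M` with the prescribed values on the basis. -/
def ofBasis {M : Type*} [AddCommMonoid M] [Module ℂ M] (g : Idx → M) : Lsa →ₗ[ℂ] M :=
  Finsupp.lsum ℂ fun i => LinearMap.toSpanSingleton ℂ M (g i)

/-- the inner super-derivation `a_inn` attached to `a ∈ 𝓛 ⊗ 𝓛` of parity `ε`:
`a_inn(x) = (-1)^{[a][x]} x ∗ a` for homogeneous `x`, extended linearly. -/
def innMap (ε : ZMod 2) (a : V) : Lsa →ₗ[ℂ] V :=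
  ofBasis fun i => sgn (ε * par i) • act2 (e i) a

/-- `d : 𝓛 → 𝓛 ⊗ 𝓛` is a super-derivation of parity `ε`:
`d(𝓛_ī) ⊆ V_{ī+ε}` and
`d([x,y]) = (-1)^{[d][x]} x ∗ d(y) - (-1)^{[y]([d]+[x])} y ∗ d(x)`
for homogeneous `x, y` (stated on basis elements and extended bilinearly). -/
def IsDerOfParity (ε : ZMod 2) (d : Lsa →ₗ[ℂ] V) : Prop :=
  (∀ i : Idx, IsParityV (par i + ε) (d (e i))) ∧
  (∀ i j : Idx,
    d (bk i j)
      = sgn (ε * par i) • act2 (e i) (d (e j))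
        - sgn (par j * (ε + par i)) • act2 (e j) (d (e i)))

/-- `d` is homogeneous of degree `ι ∈ (1/2)ℤ` with respect to the `(1/2)ℤ`-grading:
`d(𝓛_j) ⊆ V_{ι+j}`. -/
def IsDegHomogDer (ι : ℚ) (d : Lsa →ₗ[ℂ] V) : Prop :=
  ∀ i : Idx, IsDegV (ι + qdeg i) (d (e i))

/-- `D : 𝓛 → 𝓛 ⊗ 𝓛` defines a Lie super-bialgebra structure on `𝓛`: it is linear,
`D(𝓛_ī) ⊆ Σ_j 𝓛_j̄ ⊗ 𝓛_{ī-j̄}`, `Im D ⊆ Im(1⊗1-τ)`,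
`(1⊗1⊗1 + ξ + ξ²)(1 ⊗ D)D = 0`, and
`D([x,y]) = x ∗ D(y) - (-1)^{[x][y]} y ∗ D(x)`. -/
structure IsLieSuperBialgebraDelta (D : Lsa → V) : Prop where
  linear : IsLinearMap ℂ D
  parity : ∀ i : Idx, IsParityV (par i) (D (e i))
  skewIm : ∀ x : Lsa, D x ∈ ImOneSubTau
  coJacobi : ∀ x : Lsa,
    oneTensorMap D (D x) + xi (oneTensorMap D (D x)) + xi (xi (oneTensorMap D (D x))) = 0
  cocycle : ∀ i j : Idx,
    D (bk i j) = act2 (e i) (D (e j)) - sgn (par i * par j) • act2 (e j) (D (e i))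

/-! On a vector of degree `κ` the element `L_0` acts as the scalar `-κ`. If `d` has degree `ι` and
`x` has degree `j`, the Leibniz rule for `[L_0, x] = -j x` therefore reads
`-j d(x) = -(ι + j) d(x) - (-1)^{[d][x]} x ∗ d(L_0)`, so the multiples of `d(x)` by `j` cancel and
`x ∗ d(L_0)` is, up to sign, `-ι d(x)`. -/

theorem linearMap_ext_e {M : Type*} [AddCommMonoid M] [Module ℂ M] {f g : Lsa →ₗ[ℂ] M}
    (h : ∀ j, f (e j) = g (e j)) : f = g :=
  Finsupp.lhom_ext' fun j => LinearMap.ext_ring (h j)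

theorem bk_L_zero (j : Idx) : bk (.L 0) j = (-(qdeg j : ℂ)) • e j := by
  cases j <;> simp [bk, qdeg, neg_div]

theorem act2_smul (x : Lsa) (c : ℂ) (v : V) : act2 x (c • v) = c • act2 x v := by
  unfold act2
  rw [Finsupp.smul_sum]
  refine Finsupp.sum_congr fun i _ => ?_
  rw [Finsupp.sum_smul_index fun p => by rw [mul_zero, zero_smul], Finsupp.smul_sum]
  simp only [smul_smul, mul_left_comm]

theorem act2_L_zero_eq_sum (v : V) :
    act2 (e (.L 0)) v =
      v.sum fun p c => Finsupp.single p (-((qdeg p.1 + qdeg p.2 : ℚ) : ℂ) * c) := by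
  unfold act2 e
  rw [Finsupp.sum_single_index (by simp)]
  refine Finsupp.sum_congr fun p _ => ?_
  have sgn_par : sgn (par (.L 0) * par p.1) = 1 := by simp [par, sgn]
  rw [sgn_par, bk_L_zero, bk_L_zero]
  simp only [e, Finsupp.smul_single, smul_eq_mul, mul_one, one_mul, one_smul,
    Finsupp.sum_single_index, Finsupp.single_zero, ← Finsupp.single_add]
  congr 1
  push_cast
  ring

theorem IsDegV.act2_L_zero {κ : ℚ} {v : V} (hv : IsDegV κ v) :
    act2 (e (.L 0)) v = (-(κ : ℂ)) • v := by
  calc act2 (e (.L 0)) v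
      = v.sum fun p c => Finsupp.single p (-((qdeg p.1 + qdeg p.2 : ℚ) : ℂ) * c) :=
        act2_L_zero_eq_sum v
    _ = v.sum fun p c => (-(κ : ℂ)) • Finsupp.single p c :=
        Finsupp.sum_congr fun p hp => by rw [hv p hp, Finsupp.smul_single, smul_eq_mul]
    _ = (-(κ : ℂ)) • v := by rw [← Finsupp.smul_sum, Finsupp.sum_single]

theorem innMap_e (ε : ZMod 2) (u : V) (j : Idx) :
    innMap ε u (e j) = sgn (ε * par j) • act2 (e j) u := by
  simp [innMap, ofBasis, e]

theorem innMap_smul (ε : ZMod 2) (c : ℂ) (u : V) : innMap ε (c • u) = c • innMap ε u :=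
  linearMap_ext_e fun j => by
    rw [LinearMap.smul_apply, innMap_e, innMap_e, act2_smul, smul_comm]

theorem IsDerOfParity.apply_bk_L_zero {ε : ZMod 2} {d : Lsa →ₗ[ℂ] V} (hd : IsDerOfParity ε d)
    (j : Idx) :
    d (bk (.L 0) j) = act2 (e (.L 0)) (d (e j)) - innMap ε (d (e (.L 0))) (e j) := by
  have sgn_left : sgn (ε * par (.L 0)) = 1 := by simp [par, sgn]
  have sgn_right : par j * (ε + par (.L 0)) = ε * par j := by simp [par, mul_comm]
  rw [hd.2, sgn_left, sgn_right, one_smul, innMap_e]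

theorem IsDegHomogDer.innMap_apply_L_zero {ε : ZMod 2} {ι : ℚ} {d : Lsa →ₗ[ℂ] V}
    (hhom : IsDegHomogDer ι d)
    (hd : ∀ j, d (bk (.L 0) j) = act2 (e (.L 0)) (d (e j)) - innMap ε (d (e (.L 0))) (e j)) :
    innMap ε (d (e (.L 0))) = (-(ι : ℂ)) • d :=
  linearMap_ext_e fun j => by
    have leibniz : (-(qdeg j : ℂ)) • d (e j) =
        (-((ι + qdeg j : ℚ) : ℂ)) • d (e j) - innMap ε (d (e (.L 0))) (e j) := by
      rw [← (hhom j).act2_L_zero, ← hd, bk_L_zero, map_smul]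
    calc innMap ε (d (e (.L 0))) (e j)
        = (-((ι + qdeg j : ℚ) : ℂ)) • d (e j) - (-(qdeg j : ℂ)) • d (e j) := by
          rw [leibniz, sub_sub_cancel]
      _ = (-(ι : ℂ)) • d (e j) := by
          push_cast
          module

theorem nonzero_degree_der_is_inner_general {ε : ZMod 2} {ι : ℚ} (hι : ι ≠ 0) {d : Lsa →ₗ[ℂ] V}
    (hd : ∀ j, d (bk (.L 0) j) = act2 (e (.L 0)) (d (e j)) - innMap ε (d (e (.L 0))) (e j))
    (hhom : IsDegHomogDer ι d) :
    d = innMap ε ((-(ι : ℂ)⁻¹) • d (e (.L 0))) := by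
  have hι' : (ι : ℂ) ≠ 0 := Rat.cast_ne_zero.mpr hι
  rw [innMap_smul, hhom.innMap_apply_L_zero hd, smul_smul, neg_mul_neg, inv_mul_cancel₀ hι',
    one_smul]

/-- A homogeneous super-derivation `d : 𝓛 → V = 𝓛 ⊗ 𝓛` of degree `ι ∈ (1/2)ℤ`
with `ι ≠ 0` is inner, namely `d = u_inn` for `u = -(1/ι) d(L_0) ∈ V_ι`,
i.e. `d(x) = (-1)^{[u][x]} x ∗ u` for all `x ∈ 𝓛`. -/
theorem nonzero_degree_der_is_inner (ε : ZMod 2) (ι : ℚ) (hhalf : ∃ k : ℤ, ι = (k : ℚ) / 2)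
    (hι : ι ≠ 0) (d : Lsa →ₗ[ℂ] V) (hd : IsDerOfParity ε d) (hhom : IsDegHomogDer ι d) :
    d = innMap ε ((-(ι : ℂ)⁻¹) • d (e (Idx.L 0))) :=
  nonzero_degree_der_is_inner_general hι hd.apply_bk_L_zero hhom

end
end N2
end

section
/- Let L be the centerless twisted N=2 superconformal algebra, V = L ⊗ L the L-module under the adjoint diagonal action, and let d₀ be a homogeneous super-derivation from L to V of degree 0 with respect to the (1/2)ℤ-grading. Then d₀(L_0) = 0. -/
namespace N2

noncomputable section

/-!
Evaluating the cocycle identity on `(L_0, L_m)` and using that `L_0` acts on a tensor of degree `q`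
by the scalar `-q`, a derivation of degree `ι` satisfies `L_m ∗ d(L_0) = -ι d(L_m)`. For `ι = 0`
every `L_m` therefore annihilates `d(L_0)`. But a nonzero `v ∈ V` is annihilated by only finitely
many `L_m`: if `v` has a nonzero coefficient `c` at `e_a ⊗ e_b`, then for all but finitely many `m`
the only contribution to `L_m ∗ v` at `e_{m+a} ⊗ e_b` comes from `[L_m, e_a] ⊗ e_b`, and is a
nonzero multiple of `c`.
-/

/-- The translation action of `ℤ` on basis indices: `m +ᵥ i` is the index of `[L_m, e_i]`, so `m`
raises the degree by `m`. The index `n` of `G_{n/2}` moves by `2m`. -/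
instance : AddAction ℤ Idx where
  vadd
    | m, .L n => .L (m + n)
    | m, .T k => .T (k + m)
    | m, .G n => .G (n + 2 * m)
  zero_vadd
    | .L n => congrArg Idx.L (zero_add n)
    | .T k => congrArg Idx.T (add_zero k)
    | .G n => congrArg Idx.G (by ring)
  add_vadd
    | m, m', .L n => congrArg Idx.L (add_assoc m m' n)
    | m, m', .T k => congrArg Idx.T (by ring)
    | m, m', .G n => congrArg Idx.G (by ring)

/-- The structure constant of the adjoint action of the Witt algebra `span {L_m}` on a basis vector:
`[L_m, e_i] = wittCoeff m i • e_{m+i}`. -/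
def wittCoeff (m : ℤ) : Idx → ℂ
  | .L n => (m : ℂ) - n
  | .T k => -((k : ℂ) + 1 / 2)
  | .G n => ((m : ℂ) - n) / 2

lemma Idx.vadd_left_injective (i : Idx) : Function.Injective fun m : ℤ => m +ᵥ i := by
  intro m n h
  cases i with
  | L k => exact add_right_cancel (Idx.L.inj h)
  | T k => exact add_left_cancel (Idx.T.inj h)
  | G k => exact mul_left_cancel₀ two_ne_zero (add_left_cancel (Idx.G.inj h))

lemma wittCoeff_zero (i : Idx) : wittCoeff 0 i = -(qdeg i : ℂ) := by
  cases i <;> simp [wittCoeff, qdeg, neg_div, add_comm]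

lemma subsingleton_setOf_wittCoeff_eq_zero (i : Idx) :
    {m : ℤ | wittCoeff m i = 0}.Subsingleton := by
  intro m hm n hn
  cases i <;> simp only [wittCoeff, Set.mem_ofPred_eq] at hm hn
  case L k =>
    have hmn : (m : ℂ) = n := by linear_combination hm - hn
    exact_mod_cast hmn
  case T k =>
    have h_odd : ((2 * k + 1 : ℤ) : ℂ) = 0 := by push_cast; linear_combination (-2) * hm
    have : 2 * k + 1 = 0 := by exact_mod_cast h_odd
    omega
  case G k =>
    have hmn : (m : ℂ) = n := by linear_combination 2 * hm - 2 * hn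
    exact_mod_cast hmn

lemma bk_L (m : ℤ) (i : Idx) : bk (.L m) i = Finsupp.single (m +ᵥ i) (wittCoeff m i) := by
  cases i <;> simp only [bk, e, Finsupp.smul_single, smul_eq_mul, mul_one] <;> rfl

lemma act2_add (x : Lsa) (v w : V) : act2 x (v + w) = act2 x v + act2 x w := by
  simp only [act2, ← Finsupp.sum_add]
  refine Finsupp.sum_congr fun i _ => Finsupp.sum_add_index' (fun _ => ?_) fun _ _ _ => ?_
  · rw [mul_zero, zero_smul]
  · rw [mul_add, add_smul]

lemma act2_zero (x : Lsa) : act2 x 0 = 0 := by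
  simp [act2]

lemma act2_L_single (m : ℤ) (a b : Idx) (c : ℂ) :
    act2 (e (.L m)) (Finsupp.single (a, b) c) =
      Finsupp.single (m +ᵥ a, b) (wittCoeff m a * c) +
        Finsupp.single (a, m +ᵥ b) (wittCoeff m b * c) := by
  simp [act2, e, bk_L, par, sgn, mul_comm c]

lemma act2_L_apply (m : ℤ) (v : V) (a b : Idx) :
    act2 (e (.L m)) v (m +ᵥ a, m +ᵥ b) =
      wittCoeff m a * v (a, m +ᵥ b) + wittCoeff m b * v (m +ᵥ a, b) := by
  induction v using Finsupp.induction_linear with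
  | zero => simp [act2_zero]
  | add v w hv hw =>
    simp only [act2_add, Finsupp.add_apply, hv, hw]
    ring
  | single p c =>
    obtain ⟨i, j⟩ := p
    rw [act2_L_single]
    simp only [Finsupp.add_apply, Finsupp.single_apply, Prod.mk.injEq, vadd_left_cancel_iff,
      mul_ite, mul_zero]
    congr 1 <;> refine if_ctx_congr Iff.rfl (fun h => ?_) fun _ => rfl
    · rw [h.1]
    · rw [h.2]

lemma act2_L_zero_of_isDegV {q : ℚ} {v : V} (hv : IsDegV q v) :
    act2 (e (.L 0)) v = -(q : ℂ) • v := by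
  ext ⟨a, b⟩
  have h_apply := act2_L_apply 0 v a b
  simp only [zero_vadd, wittCoeff_zero] at h_apply
  rw [h_apply, Finsupp.smul_apply, smul_eq_mul]
  by_cases hab : v (a, b) = 0
  · simp [hab]
  · rw [← hv (a, b) (Finsupp.mem_support_iff.mpr hab)]
    push_cast
    ring

lemma finite_setOf_act2_L_eq_zero {v : V} (hv : v ≠ 0) :
    {m : ℤ | act2 (e (.L m)) v = 0}.Finite := by
  obtain ⟨⟨a, b⟩, hab⟩ := Finsupp.ne_iff.mp hv
  have h_inj : Function.Injective fun m : ℤ => (m +ᵥ a, -m +ᵥ b) := fun _ _ h =>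
    Idx.vadd_left_injective a (congrArg Prod.fst h)
  refine ((subsingleton_setOf_wittCoeff_eq_zero a).finite.union
    (v.support.finite_toSet.preimage h_inj.injOn)).subset fun m hm => ?_
  have h_coeff : wittCoeff m a * v (a, b) + wittCoeff m (-m +ᵥ b) * v (m +ᵥ a, -m +ᵥ b) = 0 := by
    simpa [Set.mem_ofPred_eq.mp hm] using (act2_L_apply m v a (-m +ᵥ b)).symm
  by_cases h_supp : v (m +ᵥ a, -m +ᵥ b) = 0
  · rw [h_supp, mul_zero, add_zero] at h_coeff
    exact .inl ((mul_eq_zero.mp h_coeff).resolve_right hab)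
  · exact .inr (Finsupp.mem_support_iff.mpr h_supp)

lemma eq_zero_of_forall_act2_L_eq_zero {v : V} (h : ∀ m : ℤ, act2 (e (.L m)) v = 0) : v = 0 := by
  by_contra hv
  exact Set.infinite_univ ((finite_setOf_act2_L_eq_zero hv).subset fun m _ => h m)

lemma act2_L_map_L_zero {ι : ℚ} {d : Lsa →ₗ[ℂ] V} {m : ℤ}
    (hder : d (bk (.L 0) (.L m)) =
      act2 (e (.L 0)) (d (e (.L m))) - act2 (e (.L m)) (d (e (.L 0))))
    (hdeg : IsDegV (ι + m) (d (e (.L m)))) :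
    act2 (e (.L m)) (d (e (.L 0))) = -(ι : ℂ) • d (e (.L m)) := by
  have h_bracket : bk (.L 0) (.L m) = -(m : ℂ) • e (.L m) := by simp [bk]
  calc act2 (e (.L m)) (d (e (.L 0)))
      = act2 (e (.L 0)) (d (e (.L m))) - d (bk (.L 0) (.L m)) := by rw [hder, sub_sub_cancel]
    _ = -((ι + m : ℚ) : ℂ) • d (e (.L m)) - -(m : ℂ) • d (e (.L m)) := by
      rw [act2_L_zero_of_isDegV hdeg, h_bracket, map_smul]
    _ = -(ι : ℂ) • d (e (.L m)) := by
      rw [← sub_smul]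
      push_cast
      ring_nf

theorem degree_zero_der_kills_L0_general (d : Lsa →ₗ[ℂ] V)
    (hder : ∀ m : ℤ, d (bk (.L 0) (.L m)) =
      act2 (e (.L 0)) (d (e (.L m))) - act2 (e (.L m)) (d (e (.L 0))))
    (hdeg : ∀ m : ℤ, IsDegV m (d (e (.L m)))) :
    d (e (.L 0)) = 0 :=
  eq_zero_of_forall_act2_L_eq_zero fun m => by
    simpa using act2_L_map_L_zero (ι := 0) (hder m) (by simpa using hdeg m)

/-- A homogeneous super-derivation `d₀ : 𝓛 → V = 𝓛 ⊗ 𝓛` of degree `0` with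
respect to the `(1/2)ℤ`-grading kills `L_0`: `d₀(L_0) = 0`. -/
theorem degree_zero_der_kills_L0 (ε : ZMod 2) (d : Lsa →ₗ[ℂ] V)
    (hd : IsDerOfParity ε d) (hhom : IsDegHomogDer 0 d) :
    d (e (Idx.L 0)) = 0 :=
  degree_zero_der_kills_L0_general d (fun m => by simpa [par, sgn] using hd.2 (.L 0) (.L m))
    fun m => by simpa [qdeg] using hhom (.L m)

end
end N2
end

section
/- Let L be the centerless twisted N=2 superconformal algebra and τ the super-twist map on L ⊗ L. If r ∈ L ⊗ L satisfies x ∗ r ∈ Im(1⊗1 − τ) for all x ∈ L, then r ∈ Im(1⊗1 − τ). -/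
/-!
Since `τ` is an involution, `Im(1⊗1 - τ)` is the kernel of `1⊗1 + τ`, and `τ` commutes with the
adjoint action. Hence `x ∗ r ∈ Im(1⊗1 - τ)` says that `x` annihilates `r + τ r`, and it suffices
that a tensor `v` annihilated by `L_m` for infinitely many `m` vanishes. The operator `ad L_m` maps
the basis vector `a` to a multiple of the one whose degree is larger by `m`. For all but finitely
many `m` this multiple is nonzero and `[L_m, a]` avoids the finitely many basis vectors occurring
in `v`, so a term `v(a,b) a ⊗ b` contributes `v(a,b) [L_m, a] ⊗ b` to `L_m ∗ v`, which no other
term can cancel.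
-/

namespace N2

noncomputable section

theorem mem_range_sub_iff_add_eq_zero {R M : Type*} [Ring R] [Invertible (2 : R)]
    [AddCommGroup M] [Module R M] {f : M →ₗ[R] M} (hf : Function.Involutive f) {v : M} :
    v ∈ Set.range (fun w => w - f w) ↔ v + f v = 0 := by
  constructor
  · rintro ⟨w, rfl⟩
    simp only [map_sub, hf w]
    abel
  · intro hv
    refine ⟨(⅟2 : R) • v, ?_⟩
    calc (⅟2 : R) • v - f ((⅟2 : R) • v)
        = (⅟2 : R) • (v + v) := by
          rw [map_smul, ← smul_sub, eq_neg_of_add_eq_zero_right hv, sub_neg_eq_add]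
      _ = v := by rw [← two_smul R v, invOf_smul_smul]

theorem sgn_add (p q : ZMod 2) : sgn (p + q) = sgn p * sgn q := by
  have eq_zero_or_eq_one : ∀ t : ZMod 2, t = 0 ∨ t = 1 := by decide
  rcases eq_zero_or_eq_one p with rfl | rfl <;> rcases eq_zero_or_eq_one q with rfl | rfl <;>
    simp [sgn, CharTwo.add_self_eq_zero]

theorem sgn_mul_self (p : ZMod 2) : sgn p * sgn p = 1 := by
  rw [← sgn_add, CharTwo.add_self_eq_zero]
  rfl

theorem par_of_mem_support_bk {i j k : Idx} (hk : k ∈ (bk i j).support) :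
    par k = par i + par j := by
  cases i <;> cases j <;>
    simp only [bk, e, ← Finsupp.single_neg, Finsupp.smul_single, Finsupp.support_zero,
      Finset.notMem_empty] at hk <;> try split_ifs at hk
  all_goals
    obtain rfl := Finset.mem_singleton.mp (Finsupp.support_single_subset hk)
    rfl

/-- The super-twist `tau` as a linear map. -/
def tauHom : V →ₗ[ℂ] V :=
  Finsupp.linearCombination ℂ fun p => Finsupp.single p.swap (sgn (par p.1 * par p.2))

/-- The adjoint diagonal action `act2` as a bilinear map. The map `k ↦ (k, b)` on indices encodes
`x ↦ x ⊗ b`, and `k ↦ (a, k)` encodes `x ↦ a ⊗ x`. -/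
def act2Hom : Lsa →ₗ[ℂ] V →ₗ[ℂ] V :=
  Finsupp.linearCombination ℂ fun i => Finsupp.linearCombination ℂ fun p =>
    Finsupp.mapDomain (·, p.2) (bk i p.1) +
      sgn (par i * par p.1) • Finsupp.mapDomain (p.1, ·) (bk i p.2)

theorem tauHom_apply (v : V) : tauHom v = tau v := by
  simp only [tauHom, tau, Finsupp.linearCombination_apply, Finsupp.smul_single, smul_eq_mul,
    mul_one, Prod.swap, mul_comm (sgn _)]

theorem act2Hom_apply (x : Lsa) (v : V) : act2Hom x v = act2 x v := by
  simp only [act2Hom, act2, Finsupp.linearCombination_apply, Finsupp.sum, LinearMap.sum_apply,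
    LinearMap.smul_apply, Finset.smul_sum, mul_smul, Finsupp.mapDomain]

theorem tauHom_single (a b : Idx) (c : ℂ) :
    tauHom (Finsupp.single (a, b) c) = Finsupp.single (b, a) (c * sgn (par a * par b)) := by
  simp only [tauHom, Finsupp.linearCombination_single, Finsupp.smul_single, smul_eq_mul, Prod.swap]

theorem act2Hom_single (i a b : Idx) :
    act2Hom (Finsupp.single i 1) (Finsupp.single (a, b) 1) =
      Finsupp.mapDomain (·, b) (bk i a) +
        sgn (par i * par a) • Finsupp.mapDomain (a, ·) (bk i b) := by
  simp [act2Hom]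

theorem tauHom_involutive : Function.Involutive tauHom := by
  suffices tauHom ∘ₗ tauHom = LinearMap.id from LinearMap.congr_fun this
  refine Finsupp.lhom_ext fun ⟨a, b⟩ c => ?_
  rw [LinearMap.comp_apply, tauHom_single, tauHom_single, mul_comm (par b), mul_assoc, sgn_mul_self,
    mul_one, LinearMap.id_apply]

theorem mem_ImOneSubTau_iff {v : V} : v ∈ ImOneSubTau ↔ v + tauHom v = 0 := by
  rw [← mem_range_sub_iff_add_eq_zero tauHom_involutive]
  simp only [tauHom_apply, ImOneSubTau]

theorem tauHom_mapDomain_prodMk_right {ε : ZMod 2} {x : Lsa} (hx : ∀ k ∈ x.support, par k = ε)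
    (b : Idx) :
    tauHom (Finsupp.mapDomain (·, b) x) = sgn (ε * par b) • Finsupp.mapDomain (b, ·) x := by
  simp only [Finsupp.mapDomain, Finsupp.sum, map_sum, tauHom_single, Finset.smul_sum,
    Finsupp.smul_single, smul_eq_mul]
  exact Finset.sum_congr rfl fun k hk => by rw [hx k hk, mul_comm]

theorem tauHom_mapDomain_prodMk_left {ε : ZMod 2} {x : Lsa} (hx : ∀ k ∈ x.support, par k = ε)
    (a : Idx) :
    tauHom (Finsupp.mapDomain (a, ·) x) = sgn (par a * ε) • Finsupp.mapDomain (·, a) x := by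
  simp only [Finsupp.mapDomain, Finsupp.sum, map_sum, tauHom_single, Finset.smul_sum,
    Finsupp.smul_single, smul_eq_mul]
  exact Finset.sum_congr rfl fun k hk => by rw [hx k hk, mul_comm]

theorem tauHom_act2Hom (x : Lsa) (v : V) : tauHom (act2Hom x v) = act2Hom x (tauHom v) := by
  suffices act2Hom.compr₂ tauHom = act2Hom.compl₂ tauHom from LinearMap.congr_fun₂ this x v
  ext i ⟨a, b⟩ : 4
  have sgn_left : sgn ((par i + par a) * par b) = sgn (par a * par b) * sgn (par i * par b) := by
    rw [add_mul, add_comm, sgn_add]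
  have sgn_right : sgn (par i * par a) * sgn (par a * (par i + par b)) = sgn (par a * par b) := by
    rw [mul_add, sgn_add, ← mul_assoc, mul_comm (par a) (par i), sgn_mul_self, one_mul]
  calc tauHom (act2Hom (Finsupp.single i 1) (Finsupp.single (a, b) 1))
      = sgn ((par i + par a) * par b) • Finsupp.mapDomain (b, ·) (bk i a) +
          (sgn (par i * par a) * sgn (par a * (par i + par b))) •
            Finsupp.mapDomain (·, a) (bk i b) := by
        rw [act2Hom_single, map_add, map_smul, mul_smul,
          tauHom_mapDomain_prodMk_right fun _ => par_of_mem_support_bk,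
          tauHom_mapDomain_prodMk_left fun _ => par_of_mem_support_bk]
    _ = sgn (par a * par b) • act2Hom (Finsupp.single i 1) (Finsupp.single (b, a) 1) := by
        rw [act2Hom_single, sgn_left, sgn_right, smul_add, smul_smul, add_comm]
    _ = act2Hom (Finsupp.single i 1) (tauHom (Finsupp.single (a, b) 1)) := by
        rw [tauHom_single, ← map_smul, Finsupp.smul_single, smul_eq_mul, one_mul, mul_one]

/-- The action on basis indices underlying `ad L_m`: `[L_m, a]` is a multiple of the basis
vector indexed by `shift m a`. Indices of `G` are doubled, whence `2 * m`. -/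
def shift (m : ℤ) : Idx → Idx
  | .L n => .L (m + n)
  | .T k => .T (k + m)
  | .G n => .G (n + 2 * m)

/-- The scalar by which `[L_m, a]` is a multiple of the basis vector indexed by `shift m a`. -/
def shiftCoeff (m : ℤ) : Idx → ℂ
  | .L n => m - n
  | .T k => -(k + 1 / 2)
  | .G n => (m - n) / 2

theorem bk_L_s11 (m : ℤ) (a : Idx) :
    bk (.L m) a = Finsupp.single (shift m a) (shiftCoeff m a) := by
  cases a <;> simp [bk, shift, shiftCoeff, e]

theorem shift_injective (m : ℤ) : Function.Injective (shift m) := by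
  rintro (a | a | a) (b | b | b) <;> simp [shift]

theorem shift_surjective (m : ℤ) : Function.Surjective (shift m) := by
  rintro (n | k | n)
  exacts [⟨.L (n - m), by simp [shift]⟩, ⟨.T (k - m), by simp [shift]⟩,
    ⟨.G (n - 2 * m), by simp [shift]⟩]

theorem shift_left_injective (a : Idx) : Function.Injective (shift · a) := by
  intro m n
  cases a <;> simp [shift]

theorem eventually_shift_notMem (S : Finset Idx) (a : Idx) :
    ∀ᶠ m in Filter.cofinite, shift m a ∉ S :=
  (shift_left_injective a).tendsto_cofinite.eventually S.eventually_cofinite_notMem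

theorem eventually_shiftCoeff_ne_zero (a : Idx) :
    ∀ᶠ m in Filter.cofinite, shiftCoeff m a ≠ 0 := by
  cases a with
  | T k =>
    have h : (2 * k + 1 : ℂ) ≠ 0 := by exact_mod_cast (by omega : 2 * k + 1 ≠ 0)
    refine Filter.Eventually.of_forall fun m hm => h ?_
    simp only [shiftCoeff] at hm
    linear_combination -2 * hm
  | _ n =>
    filter_upwards [Filter.eventually_cofinite_ne n] with m hm
    simpa [shiftCoeff, sub_eq_zero] using hm

theorem act2Hom_L_single (m : ℤ) (a b : Idx) :
    act2Hom (e (.L m)) (Finsupp.single (a, b) 1) =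
      Finsupp.single (shift m a, b) (shiftCoeff m a) +
        Finsupp.single (a, shift m b) (shiftCoeff m b) := by
  simp [e, act2Hom_single, bk_L_s11, par, sgn]

theorem act2Hom_L_apply_shift (m : ℤ) (v : V) (a b : Idx) :
    act2Hom (e (.L m)) v (shift m a, shift m b) =
      shiftCoeff m a * v (a, shift m b) + shiftCoeff m b * v (shift m a, b) := by
  suffices Finsupp.lapply (shift m a, shift m b) ∘ₗ act2Hom (e (.L m)) =
      shiftCoeff m a • Finsupp.lapply (a, shift m b) +
        shiftCoeff m b • Finsupp.lapply (shift m a, b) from LinearMap.congr_fun this v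
  ext ⟨x, y⟩
  simp only [LinearMap.comp_apply, Finsupp.lsingle_apply, act2Hom_L_single, Finsupp.lapply_apply,
    Finsupp.add_apply, LinearMap.add_apply, LinearMap.smul_apply, smul_eq_mul, Finsupp.single_apply,
    Prod.mk.injEq, (shift_injective m).eq_iff]
  grind

theorem eq_zero_of_frequently_act2Hom_L_eq_zero {v : V}
    (hv : ∃ᶠ m in Filter.cofinite, act2Hom (e (.L m)) v = 0) : v = 0 := by
  ext ⟨a, b⟩
  obtain ⟨m, hm, shift_notMem, coeff_ne_zero⟩ :=
    (hv.and_eventually ((eventually_shift_notMem (v.support.image Prod.fst) a).and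
      (eventually_shiftCoeff_ne_zero a))).exists
  obtain ⟨b, rfl⟩ := shift_surjective m b
  have apply_shift_eq_zero : v (shift m a, b) = 0 := by
    contrapose! shift_notMem
    exact Finset.mem_image_of_mem Prod.fst (Finsupp.mem_support_iff.mpr shift_notMem)
  have coeff_mul_eq_zero := act2Hom_L_apply_shift m v a b
  rw [hm, apply_shift_eq_zero, mul_zero, add_zero] at coeff_mul_eq_zero
  exact (mul_eq_zero.mp coeff_mul_eq_zero.symm).resolve_left coeff_ne_zero

theorem mem_image_of_action_mem_image_general (r : V)
    (h : ∃ᶠ m in Filter.cofinite, act2 (e (.L m)) r ∈ ImOneSubTau) :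
    r ∈ ImOneSubTau := by
  rw [mem_ImOneSubTau_iff]
  refine eq_zero_of_frequently_act2Hom_L_eq_zero (h.mono fun m hm => ?_)
  rwa [map_add, ← tauHom_act2Hom, act2Hom_apply, ← mem_ImOneSubTau_iff]

/-- If `r ∈ 𝓛 ⊗ 𝓛` satisfies `x ∗ r ∈ Im(1⊗1 - τ)` for all `x ∈ 𝓛`,
then `r ∈ Im(1⊗1 - τ)`. -/
theorem mem_image_of_action_mem_image (r : V)
    (h : ∀ x : Lsa, act2 x r ∈ ImOneSubTau) :
    r ∈ ImOneSubTau :=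
  mem_image_of_action_mem_image_general r (Filter.Frequently.of_forall fun m => h (e (.L m)))

end
end N2
end
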